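/- Fix Δ > 0. In the regime δ = ε → 0, the minimum noise amplitude satisfies lim_{ε → 0⁺} (ε/Δ)·V_opt^{L1}(ε, ε, Δ) = 1 − 2·log(3/2); that is, V_opt^{L1}(ε, ε, Δ) is asymptotically (1 − 2·log(3/2))·Δ/ε, and the lower and upper bounds on the minimum noise amplitude are tight in this regime. -/

import Mathlib

open MeasureTheory Real Filter Topology

/-- The (ε,δ)-differential-privacy constraint with sensitivity `Δ` on a noise
distribution `P` on ℝ. -/
def SatisfiesDP (ε δ Δ : ℝ) (P : Measure ℝ) : Prop :=
  ∀ d : ℝ, |d| ≤ Δ → ∀ S : Set ℝ, MeasurableSet S →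
    P S ≤ ENNReal.ofReal (Real.exp ε) * P ((fun s => s + d) '' S) + ENNReal.ofReal δ

/-- The minimum noise amplitude. -/
noncomputable def VoptL1 (ε δ Δ : ℝ) : ENNReal :=
  ⨅ (P : Measure ℝ) (_ : IsProbabilityMeasure P) (_ : SatisfiesDP ε δ Δ P),
    ∫⁻ x : ℝ, ENNReal.ofReal |x| ∂P

/-!
Finding `VoptL1 ε δ Δ` is a linear program over noise distributions. With `t = (e^ε - 1) / (2δ)`,
a primal and a dual feasible point give, for all `ε, δ, Δ > 0`,
`ε / (e^ε - 1) - log (1 + t) / t ≤ (ε / Δ) * VoptL1 ε δ Δ ≤ 1 - log (1 + t) / t`.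

The primal point is the Laplace distribution of rate `ε / Δ` conditioned on `|x| ≤ R`, where
`(ε / Δ) * R = log (1 + t)`: shifting it costs a factor `e^ε` in density, except on a window of
length `Δ` at one end of the support, whose uncompensated mass is exactly `δ`.

The dual point is a bounded function `h ≥ 0`, vanishing on the negative half-line. Testing the
constraint against `h (ε + ε x / Δ)` and its mirror image bounds the expectation of
`h (ε + u) - e^ε h u` at `u = ±ε x / Δ`; choosing `h` so that this difference is at least an affine
function of `u` on the positive half-line turns the bound into one on the expectation of `|x|`.

As `ε → 0` with `δ / ε` convergent, `ε / (e^ε - 1) → 1` and the two bounds merge.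
-/

/-! ### The privacy constraint in functional form -/

namespace SatisfiesDP

variable {ε δ Δ : ℝ}

lemma measureReal_le {P : Measure ℝ} [IsFiniteMeasure P] (hδ : 0 ≤ δ) (hP : SatisfiesDP ε δ Δ P)
    {d : ℝ} (hd : |d| ≤ Δ) {S : Set ℝ} (hS : MeasurableSet S) :
    P.real S ≤ exp ε * P.real ((fun s => s - d) ⁻¹' S) + δ := by
  have h := hP d hd S hS
  rw [Set.image_add_right, ← ofReal_measureReal, ← ofReal_measureReal,
    ← ENNReal.ofReal_mul (exp_pos ε).le, ← ENNReal.ofReal_add (by positivity) hδ,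
    ENNReal.ofReal_le_ofReal_iff (by positivity)] at h
  simpa only [sub_eq_add_neg] using h

lemma integral_le {P : Measure ℝ} [IsFiniteMeasure P] (hδ : 0 ≤ δ) (hP : SatisfiesDP ε δ Δ P)
    {d : ℝ} (hd : |d| ≤ Δ) {f : ℝ → ℝ} (hf : Measurable f) (hf₀ : ∀ x, 0 ≤ f x) {L : ℝ}
    (hfL : ∀ x, f x ≤ L) :
    ∫ x, f x ∂P ≤ exp ε * ∫ x, f (x - d) ∂P + δ * L := by
  have hL : 0 ≤ L := (hf₀ 0).trans (hfL 0)
  have layercake (g : ℝ → ℝ) (hg : Measurable g) (hg₀ : ∀ x, 0 ≤ g x) (hgL : ∀ x, g x ≤ L) :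
      ∫ x, g x ∂P = ∫ t in 0..L, P.real {x | t ≤ g x} := by
    have hg_int : Integrable g P := .of_bound hg.aestronglyMeasurable L
      (ae_of_all _ fun x => (abs_of_nonneg (hg₀ x)).trans_le (hgL x))
    rw [hg_int.integral_eq_integral_Ioc_meas_le (ae_of_all _ hg₀) (ae_of_all _ hgL),
      intervalIntegral.integral_of_le hL]
  have tail_int (g : ℝ → ℝ) :
      IntervalIntegrable (fun t => P.real {x | t ≤ g x}) volume 0 L :=
    Antitone.intervalIntegrable fun _ _ hst => measureReal_mono fun _ hx => hst.trans hx
  calc ∫ x, f x ∂P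
      = ∫ t in 0..L, P.real {x | t ≤ f x} := layercake f hf hf₀ hfL
    _ ≤ ∫ t in 0..L, (exp ε * P.real {x | t ≤ f (x - d)} + δ) :=
        intervalIntegral.integral_mono_on hL (tail_int f)
          (((tail_int _).const_mul _).add intervalIntegrable_const)
          fun t _ => hP.measureReal_le hδ hd (measurableSet_le measurable_const hf)
    _ = exp ε * ∫ x, f (x - d) ∂P + δ * L := by
        rw [intervalIntegral.integral_add ((tail_int _).const_mul _) intervalIntegrable_const,
          intervalIntegral.integral_const_mul, intervalIntegral.integral_const,
          layercake _ (by fun_prop) (fun x => hf₀ _) (fun x => hfL _), sub_zero, smul_eq_mul,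
          mul_comm L]

lemma of_lintegral_sub_le {f : ℝ → ENNReal} (hf : Measurable f)
    (h : ∀ d, |d| ≤ Δ →
      ∫⁻ x, (f x - ENNReal.ofReal (exp ε) * f (x + d)) ≤ ENNReal.ofReal δ) :
    SatisfiesDP ε δ Δ (volume.withDensity f) := by
  intro d hd S hS
  have measure_shift :
      volume.withDensity f ((fun s => s + d) '' S) = ∫⁻ x in S, f (x + d) := by
    rw [withDensity_apply _ ((measurableEmbedding_addRight d).measurableSet_image.2 hS)]
    exact ((measurePreserving_add_right volume d).setLIntegral_comp_emb
      (measurableEmbedding_addRight d) f S).symm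
  have shift_meas : Measurable fun x => ENNReal.ofReal (exp ε) * f (x + d) := by fun_prop
  rw [measure_shift, withDensity_apply _ hS, ← lintegral_const_mul _ (by fun_prop)]
  calc ∫⁻ x in S, f x
      ≤ ∫⁻ x in S, (ENNReal.ofReal (exp ε) * f (x + d)
          + (f x - ENNReal.ofReal (exp ε) * f (x + d))) :=
        lintegral_mono fun _ => le_add_tsub
    _ = (∫⁻ x in S, ENNReal.ofReal (exp ε) * f (x + d))
          + ∫⁻ x in S, (f x - ENNReal.ofReal (exp ε) * f (x + d)) :=
        lintegral_add_left shift_meas _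
    _ ≤ (∫⁻ x in S, ENNReal.ofReal (exp ε) * f (x + d)) + ENNReal.ofReal δ := by
        gcongr
        exact (setLIntegral_le_lintegral _ _).trans (h d hd)

end SatisfiesDP

/-! ### The dual certificate -/

/-- The smooth part of the dual test function. As a function of `x` it solves
`h' = h - x + (1 - exp (-a))` with `h 0 = 0`, and it attains its maximum at `x = a`. -/
noncomputable def dualProfile (a x : ℝ) : ℝ := x + exp (-a) - exp (x - a)

/-- The test function certifying the lower bound on the noise amplitude: `dualProfile a` on
`[0, a]`, extended to a continuous function that is constant on either side. -/
noncomputable def dualTest (a u : ℝ) : ℝ := dualProfile a (max 0 (min u a))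

section DualTest

variable {a : ℝ}

lemma dualProfile_le (a x : ℝ) : dualProfile a x ≤ a + exp (-a) - 1 := by
  unfold dualProfile
  linarith [add_one_le_exp (x - a)]

lemma dualProfile_nonneg {x : ℝ} (hx : 0 ≤ x) (hxa : x ≤ a) : 0 ≤ dualProfile a x := by
  have increment : exp (x - a) - exp (-a) = exp (x - a) * (1 - exp (-x)) := by
    rw [mul_sub, ← exp_add]
    ring_nf
  have : exp (x - a) * (1 - exp (-x)) ≤ 1 * x :=
    mul_le_mul (exp_le_one_iff.2 (by linarith)) (by linarith [add_one_le_exp (-x)])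
      (by linarith [exp_le_one_iff.2 (neg_nonpos.2 hx)]) zero_le_one
  unfold dualProfile
  linarith

lemma dualProfile_add (a x s : ℝ) :
    dualProfile a (x + s) - exp s * dualProfile a x = s - (exp s - 1) * (x + exp (-a)) := by
  have : exp (x + s - a) = exp s * exp (x - a) := by rw [← exp_add]; ring_nf
  unfold dualProfile
  rw [this]
  ring

@[fun_prop]
lemma continuous_dualTest (a : ℝ) : Continuous (dualTest a) := by
  unfold dualTest dualProfile
  fun_prop

lemma dualTest_le (a u : ℝ) : dualTest a u ≤ a + exp (-a) - 1 := dualProfile_le _ _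

lemma dualTest_nonneg (ha : 0 ≤ a) (u : ℝ) : 0 ≤ dualTest a u :=
  dualProfile_nonneg (le_max_left _ _) (max_le ha (min_le_right _ _))

lemma dualTest_of_nonpos {u : ℝ} (hu : u ≤ 0) : dualTest a u = 0 := by
  simp [dualTest, dualProfile, max_eq_left ((min_le_left u a).trans hu)]

lemma dualTest_of_le {u : ℝ} (hu : 0 ≤ u) (hua : u ≤ a) : dualTest a u = dualProfile a u := by
  rw [dualTest, min_eq_left hua, max_eq_right hu]

lemma dualTest_of_ge (ha : 0 ≤ a) {u : ℝ} (hau : a ≤ u) : dualTest a u = a + exp (-a) - 1 := by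
  rw [dualTest, min_eq_right hau, max_eq_right ha, dualProfile, sub_self, exp_zero]

lemma dualProfile_le_dualTest (ha : 0 ≤ a) {u : ℝ} (hu : 0 ≤ u) :
    dualProfile a u ≤ dualTest a u := by
  rcases le_total u a with hua | hau
  · exact (dualTest_of_le hu hua).ge
  · exact (dualTest_of_ge ha hau).symm ▸ dualProfile_le a u

lemma le_dualTest_add_sub (ha : 0 ≤ a) {s u : ℝ} (hs : 0 ≤ s) (hu : 0 ≤ u) :
    s - (exp s - 1) * (u + exp (-a)) ≤ dualTest a (u + s) - exp s * dualTest a u := by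
  rcases le_total u a with hua | hau
  · rw [dualTest_of_le hu hua, ← dualProfile_add]
    gcongr
    exact dualProfile_le_dualTest ha (add_nonneg hu hs)
  · rw [dualTest_of_ge ha hau, dualTest_of_ge ha (by linarith)]
    nlinarith [mul_nonneg (sub_nonneg.2 (one_le_exp hs)) (sub_nonneg.2 hau), add_one_le_exp s]

lemma le_dualTest_add_sub_symm (ha : 0 ≤ a) {s : ℝ} (hs : 0 ≤ s) (u : ℝ) :
    s - (exp s - 1) * (|u| + exp (-a)) ≤
      (dualTest a (u + s) - exp s * dualTest a u)
        + (dualTest a (-u + s) - exp s * dualTest a (-u)) := by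
  rcases le_total 0 u with hu | hu
  · rw [abs_of_nonneg hu, dualTest_of_nonpos (neg_nonpos.2 hu)]
    linarith [le_dualTest_add_sub ha hs hu, dualTest_nonneg ha (-u + s)]
  · rw [abs_of_nonpos hu, dualTest_of_nonpos hu]
    linarith [le_dualTest_add_sub ha hs (neg_nonneg.2 hu), dualTest_nonneg ha (u + s)]

lemma integrable_dualTest_comp {P : Measure ℝ} [IsFiniteMeasure P] (ha : 0 ≤ a) {g : ℝ → ℝ}
    (hg : Measurable g) : Integrable (fun x => dualTest a (g x)) P :=
  .of_bound ((continuous_dualTest a).measurable.comp hg).aestronglyMeasurable (a + exp (-a) - 1)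
    (ae_of_all _ fun _ => (abs_of_nonneg (dualTest_nonneg ha _)).trans_le (dualTest_le a _))

end DualTest

/-! ### The lower bound -/

/-- The ratio `t = (e^ε - 1) / (2δ)` through which the bounds on the noise amplitude depend on
`δ`. -/
noncomputable def privacyRatio (ε δ : ℝ) : ℝ := (exp ε - 1) / (2 * δ)

section Bounds

variable {ε δ Δ : ℝ}

lemma privacyRatio_pos (hε : 0 < ε) (hδ : 0 < δ) : 0 < privacyRatio ε δ :=
  div_pos (sub_pos.2 (one_lt_exp_iff.2 hε)) (by positivity)

lemma SatisfiesDP.integral_dualTest_sub_le {P : Measure ℝ} [IsFiniteMeasure P] (hδ : 0 ≤ δ)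
    (hP : SatisfiesDP ε δ Δ P) {a : ℝ} (ha : 0 ≤ a) {c d : ℝ} (hd : |d| ≤ Δ) (hcd : c * d = ε) :
    ∫ x, (dualTest a (c * x + ε) - exp ε * dualTest a (c * x)) ∂P
      ≤ δ * (a + exp (-a) - 1) := by
  have h := hP.integral_le hδ hd (f := fun x => dualTest a (c * x + ε)) (by fun_prop)
    (fun _ => dualTest_nonneg ha _) (fun _ => dualTest_le a _)
  have shift (x : ℝ) : c * (x - d) + ε = c * x := by rw [← hcd]; ring
  simp only [shift] at h
  rw [integral_sub (integrable_dualTest_comp ha (by fun_prop))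
    ((integrable_dualTest_comp ha (by fun_prop)).const_mul _), integral_const_mul]
  linarith

lemma SatisfiesDP.le_integral_abs {P : Measure ℝ} [IsProbabilityMeasure P] (hε : 0 ≤ ε)
    (hδ : 0 ≤ δ) (hΔ : 0 < Δ) (hP : SatisfiesDP ε δ Δ P) (hint : Integrable (fun x => |x|) P)
    {a : ℝ} (ha : 0 ≤ a) :
    ε - (exp ε - 1) * (ε / Δ * ∫ x, |x| ∂P + exp (-a)) ≤ 2 * (δ * (a + exp (-a) - 1)) := by
  set c := ε / Δ
  have hc₀ : 0 ≤ c := by positivity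
  have hcΔ : c * Δ = ε := div_mul_cancel₀ ε hΔ.ne'
  have right := hP.integral_dualTest_sub_le hδ ha (abs_of_pos hΔ).le hcΔ
  have left := hP.integral_dualTest_sub_le hδ ha (c := -c) (d := -Δ)
    ((abs_neg Δ).trans_le (abs_of_pos hΔ).le) (by rw [neg_mul_neg, hcΔ])
  have diff_int (b : ℝ) :
      Integrable (fun x => dualTest a (b * x + ε) - exp ε * dualTest a (b * x)) P :=
    (integrable_dualTest_comp ha (by fun_prop)).sub
      ((integrable_dualTest_comp ha (by fun_prop)).const_mul _)
  have affine_int : Integrable (fun x => (exp ε - 1) * (c * |x| + exp (-a))) P :=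
    ((hint.const_mul c).add (integrable_const _)).const_mul _
  calc ε - (exp ε - 1) * (c * ∫ x, |x| ∂P + exp (-a))
      = ∫ x, (ε - (exp ε - 1) * (c * |x| + exp (-a))) ∂P := by
        rw [integral_sub (integrable_const _) affine_int, integral_const_mul,
          integral_add (hint.const_mul c) (integrable_const _), integral_const_mul]
        simp only [integral_const, probReal_univ, one_smul]
    _ ≤ ∫ x, ((dualTest a (c * x + ε) - exp ε * dualTest a (c * x))
          + (dualTest a (-c * x + ε) - exp ε * dualTest a (-c * x))) ∂P := by
        refine integral_mono ((integrable_const _).sub affine_int)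
          ((diff_int c).add (diff_int (-c))) fun x => ?_
        have := le_dualTest_add_sub_symm ha hε (c * x)
        rwa [abs_mul, abs_of_nonneg hc₀, ← neg_mul] at this
    _ ≤ 2 * (δ * (a + exp (-a) - 1)) := by
        rw [integral_add (diff_int c) (diff_int (-c))]
        linarith

theorem ofReal_le_mul_VoptL1 (hε : 0 < ε) (hδ : 0 < δ) (hΔ : 0 < Δ) :
    ENNReal.ofReal (ε / (exp ε - 1) - log (1 + privacyRatio ε δ) / privacyRatio ε δ)
      ≤ ENNReal.ofReal (ε / Δ) * VoptL1 ε δ Δ := by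
  have hc : 0 < ε / Δ := by positivity
  simp only [VoptL1, ENNReal.mul_iInf_of_ne (ENNReal.ofReal_pos.2 hc).ne' ENNReal.ofReal_ne_top]
  refine le_iInf₂ fun P _ => le_iInf fun hP => ?_
  by_cases htop : ∫⁻ x, ENNReal.ofReal |x| ∂P = ⊤
  · rw [htop, ENNReal.mul_top (ENNReal.ofReal_pos.2 hc).ne']
    exact le_top
  have abs_nonneg_ae : 0 ≤ᵐ[P] fun x => |x| := ae_of_all _ abs_nonneg
  have hint : Integrable (fun x => |x|) P :=
    (lintegral_ofReal_ne_top_iff_integrable (by fun_prop) abs_nonneg_ae).1 htop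
  rw [← ofReal_integral_eq_lintegral_ofReal hint abs_nonneg_ae, ← ENNReal.ofReal_mul hc.le]
  refine ENNReal.ofReal_le_ofReal ?_
  set t := privacyRatio ε δ with ht
  have ht₀ : 0 < t := privacyRatio_pos hε hδ
  have hexp : exp ε - 1 = 2 * δ * t := by rw [ht, privacyRatio]; field_simp
  have h := hP.le_integral_abs hε.le hδ.le hΔ hint (log_nonneg (by linarith : 1 ≤ 1 + t))
  rw [exp_neg, exp_log (by linarith), hexp] at h
  rw [hexp, ← sub_nonneg]
  set E := ε / Δ * ∫ x, |x| ∂P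
  calc 0 ≤ (2 * (δ * (log (1 + t) + (1 + t)⁻¹ - 1)) - (ε - 2 * δ * t * (E + (1 + t)⁻¹)))
        / (2 * δ * t) := div_nonneg (sub_nonneg.2 h) (by positivity)
    _ = E - (ε / (2 * δ * t) - log (1 + t) / t) := by field_simp; ring

end Bounds

/-! ### The truncated Laplace distribution -/

lemma setIntegral_Icc_comp_abs {R : ℝ} (hR : 0 ≤ R) (g : ℝ → ℝ) :
    ∫ x in Set.Icc (-R) R, g |x| = 2 * ∫ x in 0..R, g x := by
  have indicator_abs : (Set.Icc (-R) R).indicator (fun x => g |x|)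
      = fun x => (Set.Iic R).indicator g |x| := by
    ext x
    simp only [Set.indicator, Set.mem_Icc, Set.mem_Iic, abs_le]
  rw [← integral_indicator measurableSet_Icc, indicator_abs, integral_comp_abs,
    setIntegral_indicator measurableSet_Iic, Set.Ioi_inter_Iic, intervalIntegral.integral_of_le hR]

lemma integral_exp_neg_mul {c : ℝ} (hc : c ≠ 0) (a b : ℝ) :
    ∫ x in a..b, exp (-(c * x)) = (exp (-(c * a)) - exp (-(c * b))) / c := by
  have h := intervalIntegral.integral_comp_mul_left (a := a) (b := b) exp (neg_ne_zero.2 hc)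
  simp only [neg_mul, integral_exp, smul_eq_mul] at h
  rw [h]
  field_simp
  ring

lemma integral_id_mul_exp_neg_mul {c : ℝ} (hc : c ≠ 0) (b : ℝ) :
    ∫ x in 0..b, x * exp (-(c * x)) = (1 - exp (-(c * b)) * (1 + c * b)) / c ^ 2 := by
  have antideriv (x : ℝ) : HasDerivAt (fun x => -(exp (-(c * x)) * (1 + c * x) / c ^ 2))
      (x * exp (-(c * x))) x := by
    have hlin : HasDerivAt (fun x => c * x) c x := hasDerivAt_const_mul c
    refine ((hlin.fun_neg.exp.mul (hlin.const_add 1)).div_const (c ^ 2)).neg.congr_deriv ?_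
    field_simp
    ring
  rw [intervalIntegral.integral_eq_sub_of_hasDerivAt (fun x _ => antideriv x)
    (Continuous.intervalIntegrable (by fun_prop) _ _), mul_zero, neg_zero, exp_zero]
  ring

/-- The density of the Laplace distribution of rate `c` conditioned on `[-R, R]`. -/
noncomputable def truncatedLaplacePDF (c R : ℝ) : ℝ → ENNReal :=
  (Set.Icc (-R) R).indicator
    fun x => ENNReal.ofReal (c / (2 * (1 - exp (-(c * R)))) * exp (-(c * |x|)))

/-- The Laplace distribution of rate `c` conditioned on `[-R, R]`, the noise distribution attaining
the upper bound on the noise amplitude. -/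
noncomputable def truncatedLaplace (c R : ℝ) : Measure ℝ :=
  volume.withDensity (truncatedLaplacePDF c R)

section TruncatedLaplace

variable {c R : ℝ}

lemma one_sub_exp_neg_mul_pos (hc : 0 < c) (hR : 0 < R) : 0 < 1 - exp (-(c * R)) :=
  sub_pos.2 (exp_lt_one_iff.2 (neg_lt_zero.2 (mul_pos hc hR)))

@[fun_prop]
lemma measurable_truncatedLaplacePDF (c R : ℝ) : Measurable (truncatedLaplacePDF c R) :=
  Measurable.indicator (by fun_prop) measurableSet_Icc

lemma truncatedLaplacePDF_neg (c R x : ℝ) :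
    truncatedLaplacePDF c R (-x) = truncatedLaplacePDF c R x := by
  simp only [truncatedLaplacePDF, Set.indicator, Set.mem_Icc, abs_neg, ← abs_le]

lemma lintegral_comp_abs_truncatedLaplace (hc : 0 < c) (hR : 0 < R) {g : ℝ → ℝ}
    (hg : Continuous g) (hg₀ : ∀ x, 0 ≤ x → 0 ≤ g x) :
    ∫⁻ x, ENNReal.ofReal (g |x|) ∂truncatedLaplace c R
      = ENNReal.ofReal
          (c / (1 - exp (-(c * R))) * ∫ x in 0..R, g x * exp (-(c * x))) := by
  have hmass := one_sub_exp_neg_mul_pos hc hR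
  set B := c / (2 * (1 - exp (-(c * R)))) with hB
  have hB₀ : 0 ≤ B := by positivity
  have density_mul : truncatedLaplacePDF c R * (fun x => ENNReal.ofReal (g |x|))
      = (Set.Icc (-R) R).indicator
          fun x => ENNReal.ofReal (B * (g |x| * exp (-(c * |x|)))) := by
    ext x
    rw [truncatedLaplacePDF, Pi.mul_apply,
      ← Set.indicator_mul_left _ _ fun x => ENNReal.ofReal (g |x|)]
    congr 1 with x
    rw [← hB, ← ENNReal.ofReal_mul (by positivity), mul_assoc, mul_comm (exp _)]
  rw [truncatedLaplace, lintegral_withDensity_eq_lintegral_mul _ (by fun_prop) (by fun_prop),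
    density_mul, lintegral_indicator measurableSet_Icc, ← ofReal_integral_eq_lintegral_ofReal
      (Continuous.integrableOn_Icc (by fun_prop))
      (ae_of_all _ fun x =>
        mul_nonneg hB₀ (mul_nonneg (hg₀ _ (abs_nonneg x)) (exp_pos _).le)),
    integral_const_mul, setIntegral_Icc_comp_abs hR.le (fun x => g x * exp (-(c * x))), hB]
  congr 1
  field_simp

lemma isProbabilityMeasure_truncatedLaplace (hc : 0 < c) (hR : 0 < R) :
    IsProbabilityMeasure (truncatedLaplace c R) := by
  have hmass := one_sub_exp_neg_mul_pos hc hR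
  have h := lintegral_comp_abs_truncatedLaplace hc hR (g := fun _ => 1) continuous_const
    (fun _ _ => zero_le_one)
  have total : c / (1 - exp (-(c * R))) * ∫ x in 0..R, exp (-(c * x)) = 1 := by
    rw [integral_exp_neg_mul hc.ne', mul_zero, neg_zero, exp_zero]
    field_simp
  simp only [one_mul, total, ENNReal.ofReal_one, lintegral_one] at h
  exact ⟨h⟩

lemma lintegral_abs_truncatedLaplace (hc : 0 < c) (hR : 0 < R) :
    ∫⁻ x, ENNReal.ofReal |x| ∂truncatedLaplace c R
      = ENNReal.ofReal (1 / c - R / (exp (c * R) - 1)) := by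
  have hmass := one_sub_exp_neg_mul_pos hc hR
  have hexp : 0 < exp (c * R) - 1 := sub_pos.2 (one_lt_exp_iff.2 (mul_pos hc hR))
  rw [lintegral_comp_abs_truncatedLaplace hc hR (g := fun x => x) continuous_id (fun _ hx => hx),
    integral_id_mul_exp_neg_mul hc.ne']
  rw [exp_neg] at hmass ⊢
  congr 1
  field_simp
  ring

/-- The excess of the density over its shift is confined to an end of the support, because
`exp (-(c * |x|))` changes by a factor at most `exp (c * Δ)` under shifts by at most `Δ`. -/
lemma truncatedLaplacePDF_sub_le (hc : 0 < c) (hR : 0 < R) {d Δ : ℝ} (hd : 0 ≤ d) (hdΔ : d ≤ Δ)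
    (x : ℝ) :
    truncatedLaplacePDF c R x
        - ENNReal.ofReal (exp (c * Δ)) * truncatedLaplacePDF c R (x + d)
      ≤ (Set.Icc (R - Δ) R).indicator
          (fun x => ENNReal.ofReal (c / (2 * (1 - exp (-(c * R)))) * exp (-(c * x)))) x := by
  have hmass := one_sub_exp_neg_mul_pos hc hR
  by_cases hx : x ∈ Set.Icc (-R) R
  swap
  · simp only [truncatedLaplacePDF, Set.indicator_of_notMem hx, zero_tsub, zero_le]
  rcases le_or_gt (x + d) R with hxd | hxd
  · have hxd' : x + d ∈ Set.Icc (-R) R := ⟨by linarith [hx.1], hxd⟩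
    have abs_shift : |x + d| ≤ |x| + Δ := (abs_add_le x d).trans (by rw [abs_of_nonneg hd]; gcongr)
    have density_le :
        truncatedLaplacePDF c R x
          ≤ ENNReal.ofReal (exp (c * Δ)) * truncatedLaplacePDF c R (x + d) := by
      rw [truncatedLaplacePDF, Set.indicator_of_mem hx, Set.indicator_of_mem hxd',
        ← ENNReal.ofReal_mul (exp_pos _).le, mul_left_comm, ← exp_add]
      gcongr
      nlinarith
    rw [tsub_eq_zero_of_le density_le]
    exact zero_le
  · have hx_end : x ∈ Set.Icc (R - Δ) R := ⟨by linarith, hx.2⟩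
    rw [truncatedLaplacePDF, Set.indicator_of_mem hx, Set.indicator_of_mem hx_end]
    refine tsub_le_self.trans ?_
    gcongr
    exact le_abs_self x

lemma lintegral_truncatedLaplacePDF_sub_le (hc : 0 < c) (hR : 0 < R) {d Δ : ℝ} (hd : 0 ≤ d)
    (hdΔ : d ≤ Δ) :
    ∫⁻ x, (truncatedLaplacePDF c R x
        - ENNReal.ofReal (exp (c * Δ)) * truncatedLaplacePDF c R (x + d))
      ≤ ENNReal.ofReal ((exp (c * Δ) - 1) / (2 * (exp (c * R) - 1))) := by
  have hmass := one_sub_exp_neg_mul_pos hc hR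
  have hexp : 0 < exp (c * R) - 1 := sub_pos.2 (one_lt_exp_iff.2 (mul_pos hc hR))
  refine (lintegral_mono (truncatedLaplacePDF_sub_le hc hR hd hdΔ)).trans_eq ?_
  rw [lintegral_indicator measurableSet_Icc, ← ofReal_integral_eq_lintegral_ofReal
      (Continuous.integrableOn_Icc (by fun_prop)) (ae_of_all _ fun x => by positivity),
    integral_Icc_eq_integral_Ioc, ← intervalIntegral.integral_of_le (by linarith),
    intervalIntegral.integral_const_mul, integral_exp_neg_mul hc.ne']
  have window : exp (-(c * (R - Δ))) = exp (-(c * R)) * exp (c * Δ) := by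
    rw [← exp_add]
    ring_nf
  rw [window]
  rw [exp_neg] at hmass ⊢
  congr 1
  field_simp

lemma satisfiesDP_truncatedLaplace (hc : 0 < c) (hR : 0 < R) (Δ : ℝ) :
    SatisfiesDP (c * Δ) ((exp (c * Δ) - 1) / (2 * (exp (c * R) - 1))) Δ
      (truncatedLaplace c R) := by
  refine SatisfiesDP.of_lintegral_sub_le (measurable_truncatedLaplacePDF c R) fun d hd => ?_
  rcases le_total 0 d with hd₀ | hd₀
  · exact lintegral_truncatedLaplacePDF_sub_le hc hR hd₀ ((le_abs_self d).trans hd)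
  · have h := lintegral_truncatedLaplacePDF_sub_le hc hR (neg_nonneg.2 hd₀)
      ((neg_le_abs d).trans hd)
    rw [← (Measure.measurePreserving_neg volume).lintegral_comp (by fun_prop)] at h
    simpa only [← neg_add, truncatedLaplacePDF_neg] using h

end TruncatedLaplace

/-! ### The upper bound -/

theorem mul_VoptL1_le_ofReal {ε δ Δ : ℝ} (hε : 0 < ε) (hδ : 0 < δ) (hΔ : 0 < Δ) :
    ENNReal.ofReal (ε / Δ) * VoptL1 ε δ Δ
      ≤ ENNReal.ofReal (1 - log (1 + privacyRatio ε δ) / privacyRatio ε δ) := by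
  set t := privacyRatio ε δ with ht
  have ht₀ : 0 < t := privacyRatio_pos hε hδ
  set c := ε / Δ
  have hc : 0 < c := by positivity
  have hcΔ : c * Δ = ε := div_mul_cancel₀ ε hΔ.ne'
  set R := log (1 + t) / c
  have hR : 0 < R := div_pos (log_pos (by linarith)) hc
  have hcR : c * R = log (1 + t) := mul_div_cancel₀ _ hc.ne'
  have hexp : exp (c * R) - 1 = t := by rw [hcR, exp_log (by linarith)]; ring
  have hDP : SatisfiesDP ε δ Δ (truncatedLaplace c R) := by
    have hne : exp ε - 1 ≠ 0 := (sub_pos.2 (one_lt_exp_iff.2 hε)).ne'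
    have hδ_eq : (exp ε - 1) / (2 * t) = δ := by rw [ht, privacyRatio]; field_simp
    simpa only [hcΔ, hexp, hδ_eq] using satisfiesDP_truncatedLaplace hc hR Δ
  calc ENNReal.ofReal c * VoptL1 ε δ Δ
      ≤ ENNReal.ofReal c * ∫⁻ x, ENNReal.ofReal |x| ∂truncatedLaplace c R := by
        gcongr
        exact iInf₂_le_of_le _ (isProbabilityMeasure_truncatedLaplace hc hR) (iInf_le _ hDP)
    _ = ENNReal.ofReal (c * (1 / c - R / t)) := by
        rw [lintegral_abs_truncatedLaplace hc hR, hexp, ← ENNReal.ofReal_mul hc.le]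
    _ = ENNReal.ofReal (1 - log (1 + t) / t) := by
        rw [mul_sub, mul_one_div_cancel hc.ne', ← mul_div_assoc, hcR]

/-! ### The high-privacy limit -/

lemma tendsto_exp_sub_one_div : Tendsto (fun ε : ℝ => (exp ε - 1) / ε) (𝓝[>] 0) (𝓝 1) := by
  simpa [div_eq_inv_mul] using (hasDerivAt_exp 0).tendsto_slope_zero_right

lemma tendsto_privacyRatio {δ : ℝ → ℝ} {r : ℝ} (hr : r ≠ 0)
    (hδ : Tendsto (fun ε => δ ε / ε) (𝓝[>] 0) (𝓝 r)) :
    Tendsto (fun ε => privacyRatio ε (δ ε)) (𝓝[>] 0) (𝓝 (1 / (2 * r))) := by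
  refine (tendsto_exp_sub_one_div.div (hδ.const_mul 2) (by simpa using hr)).congr' ?_
  filter_upwards [self_mem_nhdsWithin] with ε (hε : 0 < ε)
  simp only [Pi.div_apply, privacyRatio]
  rw [← mul_div_assoc, div_div_div_cancel_right₀ hε.ne']

theorem VoptL1_asymptotics_diagonal_general {Δ : ℝ} (hΔ : 0 < Δ) {δ : ℝ → ℝ} {r : ℝ} (hr : 0 < r)
    (hδ : Tendsto (fun ε => δ ε / ε) (𝓝[>] 0) (𝓝 r)) :
    Tendsto (fun ε => ENNReal.ofReal (ε / Δ) * VoptL1 ε (δ ε) Δ) (𝓝[>] 0)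
      (𝓝 (ENNReal.ofReal (1 - 2 * r * log (1 + 1 / (2 * r))))) := by
  have hlog : Tendsto (fun ε => log (1 + privacyRatio ε (δ ε)) / privacyRatio ε (δ ε)) (𝓝[>] 0)
      (𝓝 (2 * r * log (1 + 1 / (2 * r)))) := by
    have ht := tendsto_privacyRatio hr.ne' hδ
    have limit_eq : 2 * r * log (1 + 1 / (2 * r)) = log (1 + 1 / (2 * r)) / (1 / (2 * r)) := by
      field_simp
    rw [limit_eq]
    exact ((ht.const_add 1).log (by positivity)).div ht (by positivity)
  have hinv : Tendsto (fun ε : ℝ => ε / (exp ε - 1)) (𝓝[>] 0) (𝓝 1) := by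
    simpa only [inv_div, inv_one] using tendsto_exp_sub_one_div.inv₀ one_ne_zero
  have hpos : ∀ᶠ ε in 𝓝[>] 0, 0 < ε ∧ 0 < δ ε := by
    filter_upwards [self_mem_nhdsWithin, hδ.eventually_const_lt hr] with ε hε h
    exact ⟨hε, (div_pos_iff_of_pos_right hε).1 h⟩
  refine tendsto_of_tendsto_of_tendsto_of_le_of_le' (ENNReal.tendsto_ofReal (hinv.sub hlog))
    (ENNReal.tendsto_ofReal (hlog.const_sub 1)) ?_ ?_
  · filter_upwards [hpos] with ε hε using ofReal_le_mul_VoptL1 hε.1 hε.2 hΔ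
  · filter_upwards [hpos] with ε hε using mul_VoptL1_le_ofReal hε.1 hε.2 hΔ

/-- For fixed Δ > 0, in the regime δ = ε → 0⁺ the minimum noise
amplitude satisfies lim (ε/Δ)·V_opt^{L1}(ε, ε, Δ) = 1 − 2 log(3/2). -/
theorem VoptL1_asymptotics_diagonal
    (Δ : ℝ) (hΔ : 0 < Δ) :
    Tendsto (fun ε : ℝ => ENNReal.ofReal (ε / Δ) * VoptL1 ε ε Δ)
      (nhdsWithin 0 (Set.Ioi 0))
      (nhds (ENNReal.ofReal (1 - 2 * Real.log (3 / 2)))) := by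
  have hratio : Tendsto (fun ε : ℝ => ε / ε) (𝓝[>] 0) (𝓝 1) :=
    tendsto_const_nhds.congr' <| by
      filter_upwards [self_mem_nhdsWithin] with ε (hε : 0 < ε) using (div_self hε.ne').symm
  convert VoptL1_asymptotics_diagonal_general hΔ one_pos hratio using 5
  all_goals norm_num
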